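/- Let (H,d) be a Hadamard space and (x_n) ⊂ H a bounded sequence. Then the function ω(x) = limsup_{n→∞} d(x,x_n)², x ∈ H, has a unique minimizer (called the asymptotic center of (x_n)). -/

import Mathlib

open Filter Topology
open scoped Classical

/-- `γ`, restricted to `[0,1]`, is an affinely parametrized geodesic. -/
def IsGeodesic {H : Type*} [MetricSpace H] (γ : ℝ → H) : Prop :=
  ∀ s ∈ Set.Icc (0:ℝ) 1, ∀ t ∈ Set.Icc (0:ℝ) 1,
    dist (γ s) (γ t) = |s - t| * dist (γ 0) (γ 1)

/-- A Hadamard space: a complete geodesic metric space satisfying the CAT(0) inequality. -/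
structure HadamardSpace (H : Type*) [MetricSpace H] [CompleteSpace H] : Prop where
  geodesic : ∀ x y : H, ∃ γ : ℝ → H, IsGeodesic γ ∧ γ 0 = x ∧ γ 1 = y
  cat0 : ∀ (x : H) (γ : ℝ → H), IsGeodesic γ → ∀ t ∈ Set.Icc (0:ℝ) 1,
      dist x (γ t) ^ 2 ≤ (1 - t) * dist x (γ 0) ^ 2 + t * dist x (γ 1) ^ 2
        - t * (1 - t) * dist (γ 0) (γ 1) ^ 2

/-- A set is (geodesically) convex if it contains every geodesic segment between its points. -/
def GeodesicConvex {H : Type*} [MetricSpace H] (C : Set H) : Prop :=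
  ∀ γ : ℝ → H, IsGeodesic γ → γ 0 ∈ C → γ 1 ∈ C → ∀ t ∈ Set.Icc (0:ℝ) 1, γ t ∈ C

/-- A function `f : H → (−∞,∞]` is convex if it is convex along every geodesic. -/
def ConvexFun {H : Type*} [MetricSpace H] (f : H → EReal) : Prop :=
  ∀ γ : ℝ → H, IsGeodesic γ → ∀ t ∈ Set.Icc (0:ℝ) 1,
    f (γ t) ≤ ((1 - t : ℝ) : EReal) * f (γ 0) + ((t : ℝ) : EReal) * f (γ 1)

/-- `f` is strongly convex with parameter `β > 0`. -/
def StronglyConvexWith {H : Type*} [MetricSpace H] (β : ℝ) (f : H → EReal) : Prop :=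
  ∀ γ : ℝ → H, IsGeodesic γ → ∀ t ∈ Set.Icc (0:ℝ) 1,
    f (γ t) ≤ ((1 - t : ℝ) : EReal) * f (γ 0) + ((t : ℝ) : EReal) * f (γ 1)
      - ((β * (t * (1 - t)) * dist (γ 0) (γ 1) ^ 2 : ℝ) : EReal)

/-- `f : H → (−∞,∞]` is proper (not identically `∞`, never `−∞`), convex and lsc. -/
def ProperConvexLsc {H : Type*} [MetricSpace H] (f : H → EReal) : Prop :=
  (∃ x, f x ≠ ⊤) ∧ (∀ x, f x ≠ ⊥) ∧ ConvexFun f ∧ LowerSemicontinuous f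

/-- `c` is an asymptotic center of the (bounded) sequence `x`:
it minimizes `y ↦ limsup_n d(y, x_n)²`. -/
def IsAsymptoticCenter {H : Type*} [MetricSpace H] (x : ℕ → H) (c : H) : Prop :=
  ∀ y : H, limsup (fun n => dist c (x n) ^ 2) atTop ≤ limsup (fun n => dist y (x n) ^ 2) atTop

/-- `x` weakly converges to `c` if `c` is the asymptotic center of every subsequence of `x`. -/
def WeakConvSeq {H : Type*} [MetricSpace H] (x : ℕ → H) (c : H) : Prop :=
  ∀ φ : ℕ → ℕ, StrictMono φ → IsAsymptoticCenter (x ∘ φ) c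

/-- Mosco convergence of `fn` to `f`. -/
def MoscoConv {H : Type*} [MetricSpace H] (fn : ℕ → H → EReal) (f : H → EReal) : Prop :=
  (∀ (x : H) (xs : ℕ → H), Bornology.IsBounded (Set.range xs) → WeakConvSeq xs x →
      f x ≤ liminf (fun n => fn n (xs n)) atTop) ∧
  (∀ x : H, ∃ ys : ℕ → H, Tendsto ys atTop (𝓝 x) ∧
      Tendsto (fun n => fn n (ys n)) atTop (𝓝 (f x)))

/-- `p` is the resolvent `J_λ x` of `f` at `x`: it minimizes `y ↦ f(y) + d(x,y)²/(2λ)`. -/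
def IsResolventPt {H : Type*} [MetricSpace H] (f : H → EReal) (lam : ℝ) (x p : H) : Prop :=
  ∀ y : H, f p + ((dist x p ^ 2 / (2 * lam) : ℝ) : EReal)
    ≤ f y + ((dist x y ^ 2 / (2 * lam) : ℝ) : EReal)

/-- The Moreau–Yosida envelope `f_λ(x) = inf_y [f(y) + d(x,y)²/(2λ)]`. -/
noncomputable def MoreauEnv {H : Type*} [MetricSpace H] (f : H → EReal) (lam : ℝ) (x : H) :
    EReal :=
  ⨅ y : H, f y + ((dist x y ^ 2 / (2 * lam) : ℝ) : EReal)

/-- `p` is the metric projection of `x` onto `C`. -/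
def IsProjPt {H : Type*} [MetricSpace H] (C : Set H) (x p : H) : Prop :=
  p ∈ C ∧ ∀ c ∈ C, dist x p ≤ dist x c

/-- The indicator function of a set, with values in `(−∞,∞]`. -/
noncomputable def indicatorE {H : Type*} (C : Set H) : H → EReal :=
  fun x => if x ∈ C then (0 : EReal) else ⊤

/-- `y = S_t x` is the gradient-flow semigroup value:
the limit of the iterated resolvents `(J_{t/n})^{(n)} x`. -/
def IsGradientFlowPt {H : Type*} [MetricSpace H] (J : ℝ → H → H) (t : ℝ) (x y : H) : Prop :=
  Tendsto (fun n : ℕ => (J (t / (n : ℝ)))^[n] x) atTop (𝓝 y)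

section AsymptoticCenter

variable {H : Type*} [MetricSpace H]

/-- The function `ω(y) = limsup_n d(y,x_n)²` attached to a sequence `x`. -/
noncomputable def asymptoticRadiusSq (x : ℕ → H) (y : H) : ℝ :=
  limsup (fun n => dist y (x n) ^ 2) atTop

theorem exists_dist_le_of_isBounded_range {x : ℕ → H} (hx : Bornology.IsBounded (Set.range x))
    (y : H) : ∃ B, ∀ n, dist y (x n) ≤ B := by
  obtain ⟨B, hB⟩ := hx.subset_closedBall y
  exact ⟨B, fun n => by simpa [dist_comm] using hB (Set.mem_range_self n)⟩

theorem asymptoticRadiusSq_le {x : ℕ → H} {y : H} {a : ℝ}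
    (h : ∀ᶠ n in atTop, dist y (x n) ^ 2 ≤ a) : asymptoticRadiusSq x y ≤ a :=
  limsup_le_of_le (isCoboundedUnder_le_of_le atTop (x := 0) fun _ => sq_nonneg _) h

theorem eventually_dist_sq_lt {x : ℕ → H} (hx : Bornology.IsBounded (Set.range x)) {y : H}
    {a : ℝ} (h : asymptoticRadiusSq x y < a) : ∀ᶠ n in atTop, dist y (x n) ^ 2 < a := by
  obtain ⟨B, hB⟩ := exists_dist_le_of_isBounded_range hx y
  exact eventually_lt_of_limsup_lt h
    (isBoundedUnder_of ⟨B ^ 2, fun n => pow_le_pow_left₀ dist_nonneg (hB n) 2⟩)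

theorem asymptoticRadiusSq_nonneg {x : ℕ → H} (hx : Bornology.IsBounded (Set.range x)) (y : H) :
    0 ≤ asymptoticRadiusSq x y := by
  by_contra! h
  obtain ⟨n, hn⟩ := (eventually_dist_sq_lt hx h).exists
  exact absurd hn (sq_nonneg _).not_gt

/-- `ω` is strongly convex at midpoints. -/
theorem HadamardSpace.exists_asymptoticRadiusSq_midpoint_le [CompleteSpace H]
    (hH : HadamardSpace H) {x : ℕ → H} (hx : Bornology.IsBounded (Set.range x)) (a b : H) :
    ∃ m, asymptoticRadiusSq x m ≤
      (asymptoticRadiusSq x a + asymptoticRadiusSq x b) / 2 - dist a b ^ 2 / 4 := by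
  obtain ⟨γ, hγ, rfl, rfl⟩ := hH.geodesic a b
  refine ⟨γ (1 / 2), le_of_forall_pos_le_add fun ε hε => asymptoticRadiusSq_le ?_⟩
  filter_upwards [eventually_dist_sq_lt hx (lt_add_of_pos_right (asymptoticRadiusSq x (γ 0)) hε),
    eventually_dist_sq_lt hx (lt_add_of_pos_right (asymptoticRadiusSq x (γ 1)) hε)] with n h₀ h₁
  have h := hH.cat0 (x n) γ hγ (1 / 2) (by norm_num)
  simp only [dist_comm (x n)] at h
  linarith

theorem HadamardSpace.dist_sq_le_of_forall_le_asymptoticRadiusSq [CompleteSpace H]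
    (hH : HadamardSpace H) {x : ℕ → H} (hx : Bornology.IsBounded (Set.range x)) {I : ℝ}
    (hI : ∀ y, I ≤ asymptoticRadiusSq x y) (a b : H) :
    dist a b ^ 2 ≤ 2 * (asymptoticRadiusSq x a - I) + 2 * (asymptoticRadiusSq x b - I) := by
  obtain ⟨m, hm⟩ := hH.exists_asymptoticRadiusSq_midpoint_le hx a b
  linarith [hI m]

theorem asymptoticRadiusSq_le_of_tendsto {x : ℕ → H} (hx : Bornology.IsBounded (Set.range x))
    {y : ℕ → H} {c : H} {I : ℝ} (hy : Tendsto y atTop (𝓝 c))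
    (hI : Tendsto (fun k => asymptoticRadiusSq x (y k)) atTop (𝓝 I)) :
    asymptoticRadiusSq x c ≤ I := by
  obtain ⟨B, hB⟩ := exists_dist_le_of_isBounded_range hx c
  have hd : Tendsto (fun k => dist c (y k)) atTop (𝓝 0) := by
    simpa using (tendsto_const_nhds (x := c)).dist hy
  have hlim : Tendsto (fun k => asymptoticRadiusSq x (y k) +
      dist c (y k) * (2 * B + dist c (y k))) atTop (𝓝 I) := by
    simpa using hI.add (hd.mul (hd.const_add (2 * B)))
  refine ge_of_tendsto' hlim fun k => le_of_forall_pos_le_add fun ε hε => asymptoticRadiusSq_le ?_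
  filter_upwards [eventually_dist_sq_lt hx (lt_add_of_pos_right (asymptoticRadiusSq x (y k)) hε)]
    with n hn
  have h₁ := dist_triangle c (y k) (x n)
  have h₂ := dist_triangle_left (y k) (x n) c
  have hsum : 0 ≤ dist c (x n) + dist (y k) (x n) := by positivity
  have hdk : 0 ≤ dist c (y k) := dist_nonneg
  have h₃ : (dist c (x n) - dist (y k) (x n)) * (dist c (x n) + dist (y k) (x n)) ≤
      dist c (y k) * (2 * B + dist c (y k)) :=
    mul_le_mul (by linarith) (by linarith [hB n]) hsum hdk
  linarith

end AsymptoticCenter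

/-- In a Hadamard space, every bounded sequence has a unique asymptotic
center, i.e. the function `ω(y) = limsup_n d(y,x_n)²` has a unique minimizer. -/
theorem exists_unique_asymptotic_center
    {H : Type*} [MetricSpace H] [CompleteSpace H] (hH : HadamardSpace H)
    (x : ℕ → H) (hx : Bornology.IsBounded (Set.range x)) :
    ∃! c : H, IsAsymptoticCenter x c := by
  have : Nonempty H := ⟨x 0⟩
  set I := ⨅ y, asymptoticRadiusSq x y
  have hI : ∀ y, I ≤ asymptoticRadiusSq x y :=
    ciInf_le ⟨0, Set.forall_mem_range.2 (asymptoticRadiusSq_nonneg hx)⟩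
  choose y hy using fun k : ℕ => exists_lt_of_ciInf_lt
    (lt_add_of_pos_right I (Nat.one_div_pos_of_nat (α := ℝ) (n := k)))
  have hω : Tendsto (fun k => asymptoticRadiusSq x (y k)) atTop (𝓝 I) :=
    tendsto_of_tendsto_of_tendsto_of_le_of_le tendsto_const_nhds
      (by simpa using (tendsto_one_div_add_atTop_nhds_zero_nat (𝕜 := ℝ)).const_add I)
      (fun k => hI (y k)) fun k => (hy k).le
  have hcauchy : CauchySeq y := by
    refine cauchySeq_of_le_tendsto_0 (fun N : ℕ => √(4 * (1 / ((N : ℝ) + 1))))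
      (fun n m N hn hm => Real.le_sqrt_of_sq_le ?_) ?_
    · have h := hH.dist_sq_le_of_forall_le_asymptoticRadiusSq hx hI (y n) (y m)
      linarith [hy n, hy m, Nat.one_div_le_one_div (α := ℝ) hn,
        Nat.one_div_le_one_div (α := ℝ) hm]
    · simpa using ((tendsto_one_div_add_atTop_nhds_zero_nat (𝕜 := ℝ)).const_mul 4).sqrt
  obtain ⟨c, hc⟩ := cauchySeq_tendsto_of_complete hcauchy
  have hcI : asymptoticRadiusSq x c ≤ I := asymptoticRadiusSq_le_of_tendsto hx hc hω
  refine ⟨c, fun z => hcI.trans (hI z), fun z hz => ?_⟩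
  have hzI : asymptoticRadiusSq x z ≤ I := (hz c).trans hcI
  have h := hH.dist_sq_le_of_forall_le_asymptoticRadiusSq hx hI z c
  exact dist_eq_zero.1 (pow_eq_zero_iff two_ne_zero |>.1 (le_antisymm (by linarith) (sq_nonneg _)))
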